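/- arXiv:2511.21295 — 4 statements merged into one kernel-verified Lean document; each statement's English description precedes it below -/
import Mathlib

section
/- Fix positive reals π_tf, π_tk, π_lf, π_lk, π_S, α, k, v, V, W, a, b with a ≤ b, and a positive integer J_max. Define, for λ > 0, f_i*(λ) = [k·λ·(π_tf + π_tk·v + α)/(2·π_tf·v)]^{2/3}, S*(λ) = [2·v·((π_tf + α)·J_max + 2·(π_lf + π_S))/(λ·W·(π_tf + π_tk·v + α))]^{1/2}, and Z*(λ) = (1/α)·U_o(S*(λ), J_max, f_i*(λ)) + U_p(S*(λ), J_max, f_i*(λ)), where U_o(S, J, f) = [2(π_S + π_lf) + π_tf·J]/(2·λ·S·W) + π_tf·((a+b)/(2V) + f/λ) + (π_tf/v + π_tk)·(k·f^{−1/2} + (S + 2W)/4) + (π_lk/J)·((a + b·J)/(1 + J))·(1/V + 1) and U_p(S, J, f) = (k/v)·f^{−1/2} + (S + 2W)/(4v) + J/(2·λ·S·W) + (a+b)/(2V). Then there exist real constants A, B, C, not depending on λ, with A ≠ 0 and B ≠ 0, such that Z*(λ) = A·λ^{−1/2} + B·λ^{−1/3} + C for every λ > 0. -/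
/-!
The optimal spacing and idle density are pure power laws in the demand density:
`S* = s₀ λ^{-1/2}` and `f* = (c λ)^{2/3}` with `s₀, c > 0` free of `λ`. Hence `S*` and
`1 / (λ S*)` both scale as `λ^{-1/2}`, while `f* / λ` and `f*^{-1/2}` both scale as `λ^{-1/3}`;
every other term of the cost is constant. Collecting coefficients gives `A`, `B`, `C`, and `A`, `B`
are sums of positive terms, hence nonzero.
-/

/-- Operator cost per trip of the fly-by-transit corridor. -/
noncomputable def FBT_Uo (πtf πtk πlf πlk πS k v V W a b lam S f : ℝ) (J : ℕ) : ℝ :=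
  (2 * (πS + πlf) + πtf * J) / (2 * lam * S * W)
    + πtf * ((a + b) / (2 * V) + f / lam)
    + (πtf / v + πtk) * (k * f ^ (-(1 / 2) : ℝ) + (S + 2 * W) / 4)
    + (πlk / J) * ((a + b * J) / (1 + J)) * (1 / V + 1)

/-- Patron cost per trip of the fly-by-transit corridor. -/
noncomputable def FBT_Up (k v V W a b lam S f : ℝ) (J : ℕ) : ℝ :=
  (k / v) * f ^ (-(1 / 2) : ℝ) + (S + 2 * W) / (4 * v)
    + J / (2 * lam * S * W) + (a + b) / (2 * V)

/-- Optimal idle-trailer density. -/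
noncomputable def FBT_fstar (πtf πtk α k v lam : ℝ) : ℝ :=
  (k * lam * (πtf + πtk * v + α) / (2 * πtf * v)) ^ ((2 : ℝ) / 3)

/-- Optimal station spacing for platoon size `J`. -/
noncomputable def FBT_Sstar (πtf πtk πlf πS α v W lam : ℝ) (J : ℕ) : ℝ :=
  (2 * v * ((πtf + α) * J + 2 * (πlf + πS))
      / (lam * W * (πtf + πtk * v + α))) ^ ((1 : ℝ) / 2)

theorem FBT_Sstar_eq {πtf πtk πlf πS α v W lam : ℝ} (J : ℕ) (hπtf : 0 < πtf) (hπtk : 0 < πtk)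
    (hπlf : 0 < πlf) (hπS : 0 < πS) (hα : 0 < α) (hv : 0 < v) (hW : 0 < W) (hlam : 0 < lam) :
    FBT_Sstar πtf πtk πlf πS α v W lam J
      = FBT_Sstar πtf πtk πlf πS α v W 1 J * lam ^ (-(1 / 2) : ℝ) := by
  unfold FBT_Sstar
  rw [Real.rpow_neg hlam.le, ← Real.inv_rpow hlam.le,
    ← Real.mul_rpow (by positivity) (by positivity)]
  congr 1
  field_simp

theorem FBT_fstar_div_eq {πtf πtk α k v lam : ℝ} (hπtf : 0 < πtf) (hπtk : 0 < πtk)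
    (hα : 0 < α) (hk : 0 < k) (hv : 0 < v) (hlam : 0 < lam) :
    FBT_fstar πtf πtk α k v lam / lam
      = FBT_fstar πtf πtk α k v 1 * lam ^ (-(1 / 3) : ℝ) := by
  unfold FBT_fstar
  have h : k * lam * (πtf + πtk * v + α) / (2 * πtf * v)
      = k * 1 * (πtf + πtk * v + α) / (2 * πtf * v) * lam := by ring
  rw [h, Real.mul_rpow (by positivity) hlam.le, mul_div_assoc, ← Real.rpow_sub_one hlam.ne']
  norm_num

theorem FBT_fstar_rpow_eq {πtf πtk α k v lam : ℝ} (hπtf : 0 < πtf) (hπtk : 0 < πtk)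
    (hα : 0 < α) (hk : 0 < k) (hv : 0 < v) (hlam : 0 < lam) :
    FBT_fstar πtf πtk α k v lam ^ (-(1 / 2) : ℝ)
      = FBT_fstar πtf πtk α k v 1 ^ (-(1 / 2) : ℝ) * lam ^ (-(1 / 3) : ℝ) := by
  unfold FBT_fstar
  have h : k * lam * (πtf + πtk * v + α) / (2 * πtf * v)
      = k * 1 * (πtf + πtk * v + α) / (2 * πtf * v) * lam := by ring
  rw [h, Real.mul_rpow (by positivity) hlam.le, Real.mul_rpow (by positivity) (by positivity),
    ← Real.rpow_mul hlam.le]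
  norm_num

/-- Proposition 1 (economies of scale of fly-by transit): with platoon size fixed at
`J_max` and `S`, `f_i` at their optimal values, the optimized generalized average
system cost decomposes exactly as `A·λ^{-1/2} + B·λ^{-1/3} + C`. -/
theorem FBT_economies_of_scale
    (πtf πtk πlf πlk πS α k v V W a b : ℝ)
    (hπtf : 0 < πtf) (hπtk : 0 < πtk) (hπlf : 0 < πlf) (hπlk : 0 < πlk)
    (hπS : 0 < πS) (hα : 0 < α) (hk : 0 < k) (hv : 0 < v) (hV : 0 < V)
    (hW : 0 < W) (ha : 0 < a) (hb : 0 < b) (hab : a ≤ b)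
    (Jmax : ℕ) (hJ : 0 < Jmax) :
    ∃ A B C : ℝ, A ≠ 0 ∧ B ≠ 0 ∧ ∀ lam : ℝ, 0 < lam →
      (1 / α) * FBT_Uo πtf πtk πlf πlk πS k v V W a b lam
            (FBT_Sstar πtf πtk πlf πS α v W lam Jmax)
            (FBT_fstar πtf πtk α k v lam) Jmax
          + FBT_Up k v V W a b lam
            (FBT_Sstar πtf πtk πlf πS α v W lam Jmax)
            (FBT_fstar πtf πtk α k v lam) Jmax
        = A * lam ^ (-(1 / 2) : ℝ) + B * lam ^ (-(1 / 3) : ℝ) + C := by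
  have hJ' : (0 : ℝ) < Jmax := by exact_mod_cast hJ
  -- The coefficients of the power laws are the values at unit demand density.
  obtain ⟨s, hs⟩ : ∃ s, s = FBT_Sstar πtf πtk πlf πS α v W 1 Jmax := ⟨_, rfl⟩
  obtain ⟨c, hc⟩ : ∃ c, c = FBT_fstar πtf πtk α k v 1 := ⟨_, rfl⟩
  have hs0 : 0 < s := by rw [hs]; unfold FBT_Sstar; positivity
  have hc0 : 0 < c := by rw [hc]; unfold FBT_fstar; positivity
  refine ⟨(1 / α) * ((2 * (πS + πlf) + πtf * Jmax) / (2 * s * W) + (πtf / v + πtk) * (s / 4))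
      + s / (4 * v) + Jmax / (2 * s * W),
    (1 / α) * (πtf * c + (πtf / v + πtk) * (k * c ^ (-(1 / 2) : ℝ)))
      + (k / v) * c ^ (-(1 / 2) : ℝ),
    (1 / α) * (πtf * ((a + b) / (2 * V)) + (πtf / v + πtk) * (W / 2)
      + (πlk / Jmax) * ((a + b * Jmax) / (1 + Jmax)) * (1 / V + 1))
      + W / (2 * v) + (a + b) / (2 * V), by positivity, by positivity, ?_⟩
  intro lam hlam
  unfold FBT_Uo FBT_Up
  rw [FBT_fstar_div_eq hπtf hπtk hα hk hv hlam, FBT_fstar_rpow_eq hπtf hπtk hα hk hv hlam,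
    FBT_Sstar_eq Jmax hπtf hπtk hπlf hπS hα hv hW hlam, ← hs, ← hc]
  have hp0 : 0 < lam ^ (-(1 / 2) : ℝ) := by positivity
  have hp : lam * lam ^ (-(1 / 2) : ℝ) * lam ^ (-(1 / 2) : ℝ) = 1 := by
    rw [mul_assoc, ← Real.rpow_add hlam]
    norm_num
    rw [Real.rpow_neg_one, mul_inv_cancel₀ hlam.ne']
  generalize lam ^ (-(1 / 2) : ℝ) = p at hp hp0 ⊢
  generalize lam ^ (-(1 / 3) : ℝ) = q
  generalize c ^ (-(1 / 2) : ℝ) = d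
  -- Since `λ p² = 1`, dividing by `λ (s p)` amounts to multiplying by `p / s`.
  have key : ∀ x : ℝ, x / (2 * lam * (s * p) * W) = x / (2 * s * W) * p := by
    intro x
    rw [div_mul_eq_mul_div, div_eq_div_iff (by positivity) (by positivity)]
    linear_combination (-2 * x * s * W) * hp
  rw [key, key]
  ring
end

section
/- Let p, q > 0 and let r be a real constant. The function Z(f) = p·f + q·f^{−1/2} + r on (0, ∞) attains its global minimum at the unique point f* = (q/(2p))^{2/3}. In particular, for the taxi model with p = π_cf/(α·λ) and q = (k/α)·((π_cf + α)/v + π_ck), where π_cf, π_ck, α, λ, k, v are positive reals, the optimal idle-taxi density is f_i* = [λ·k·(π_cf + π_ck·v + α)/(2·π_cf·v)]^{2/3}. -/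
/-! Put `c = (q / (2p))^{1/3}` and `s = √f`. Then `f* = c²`, `q = 2pc³`, and the excess cost factors
as `Z(f) - Z(f*) = p (s - c)² (s + 2c) / s`, which is nonnegative and vanishes only at `s = c`.
The taxi-model formula is the simplification of `q / (2p)`. -/

theorem sq_rpow_neg_half {s : ℝ} (hs : 0 < s) : (s ^ 2) ^ (-(1 / 2) : ℝ) = s⁻¹ := by
  rw [Real.rpow_neg (by positivity), ← Real.sqrt_eq_rpow, Real.sqrt_sq hs.le]

/-- The excess of the cost at `s²` over the cost at `c²`, when `c` is the critical value. -/
theorem cost_excess {p c s : ℝ} (hc : 0 < c) (hs : 0 < s) :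
    (p * s ^ 2 + 2 * p * c ^ 3 * s⁻¹) - (p * c ^ 2 + 2 * p * c ^ 3 * c⁻¹)
      = p * (s - c) ^ 2 * (s + 2 * c) / s := by
  field_simp
  ring

/-- `Z(f) = p·f + q·f^{-1/2} + r` on `(0, ∞)` is uniquely minimized at
`f* = (q/(2p))^{2/3}`; in particular, for the taxi model with `p = π_cf/(α·λ)` and
`q = (k/α)·((π_cf + α)/v + π_ck)`, the optimal idle-taxi density is
`f_i* = [λ·k·(π_cf + π_ck·v + α)/(2·π_cf·v)]^{2/3}`. -/
theorem idle_taxi_density_optimal (p q r : ℝ) (hp : 0 < p) (hq : 0 < q) :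
    (∀ f : ℝ, 0 < f →
        p * (q / (2 * p)) ^ ((2 : ℝ) / 3)
            + q * ((q / (2 * p)) ^ ((2 : ℝ) / 3)) ^ (-(1 / 2) : ℝ) + r
          ≤ p * f + q * f ^ (-(1 / 2) : ℝ) + r) ∧
    (∀ f : ℝ, 0 < f →
        p * f + q * f ^ (-(1 / 2) : ℝ) + r
          = p * (q / (2 * p)) ^ ((2 : ℝ) / 3)
              + q * ((q / (2 * p)) ^ ((2 : ℝ) / 3)) ^ (-(1 / 2) : ℝ) + r
        → f = (q / (2 * p)) ^ ((2 : ℝ) / 3)) ∧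
    (∀ πcf πck α lam k v : ℝ,
        0 < πcf → 0 < πck → 0 < α → 0 < lam → 0 < k → 0 < v →
        p = πcf / (α * lam) → q = (k / α) * ((πcf + α) / v + πck) →
        (q / (2 * p)) ^ ((2 : ℝ) / 3)
          = (lam * k * (πcf + πck * v + α) / (2 * πcf * v)) ^ ((2 : ℝ) / 3)) := by
  obtain ⟨c, hc, hcf, hcq⟩ : ∃ c : ℝ, 0 < c ∧ (q / (2 * p)) ^ ((2 : ℝ) / 3) = c ^ 2 ∧
      q = 2 * p * c ^ 3 := by
    have hb : 0 < q / (2 * p) := by positivity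
    refine ⟨(q / (2 * p)) ^ ((1 : ℝ) / 3), by positivity, ?_, ?_⟩
    · rw [← Real.rpow_mul_natCast hb.le]
      norm_num
    · rw [← Real.rpow_mul_natCast hb.le]
      norm_num
      field_simp
  refine ⟨fun f hf => ?_, fun f hf h => ?_, ?_⟩
  · obtain ⟨s, hs, rfl⟩ : ∃ s : ℝ, 0 < s ∧ f = s ^ 2 :=
      ⟨√f, Real.sqrt_pos.2 hf, (Real.sq_sqrt hf.le).symm⟩
    rw [hcf, sq_rpow_neg_half hc, sq_rpow_neg_half hs, hcq]
    have hnonneg : 0 ≤ p * (s - c) ^ 2 * (s + 2 * c) / s := by positivity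
    linarith [cost_excess (p := p) hc hs]
  · obtain ⟨s, hs, rfl⟩ : ∃ s : ℝ, 0 < s ∧ f = s ^ 2 :=
      ⟨√f, Real.sqrt_pos.2 hf, (Real.sq_sqrt hf.le).symm⟩
    rw [hcf, sq_rpow_neg_half hc, sq_rpow_neg_half hs, hcq] at h
    have hzero : p * (s - c) ^ 2 * (s + 2 * c) / s = 0 := by
      linarith [cost_excess (p := p) hc hs]
    have hpos : s + 2 * c ≠ 0 := by positivity
    have hsc : s - c = 0 := by simpa [hp.ne', hs.ne', hpos] using hzero
    rw [hcf, sub_eq_zero.1 hsc]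
  · intro πcf πck α lam k v h1 h2 h3 h4 h5 h6 hpe hqe
    congr 1
    rw [hpe, hqe]
    field_simp
    ring
end

section
/- Fix positive reals π_cf, π_ck, α, k, v, V, W, a, b with a ≤ b. For λ > 0 define Z_taxi*(λ) = (1/α)·U_o(f_i*(λ)) + U_p(f_i*(λ)), where f_i*(λ) = [λ·k·(π_cf + π_ck·v + α)/(2·π_cf·v)]^{2/3}, U_o(f) = π_cf·(f/λ + (k/v)·f^{−1/2} + W/(2v) + (a+b)/(2V)) + π_ck·(k·f^{−1/2} + W/2 + (a+b)/2), and U_p(f) = (k/v)·f^{−1/2} + W/(2v) + (a+b)/(2V). Then there exist real constants A and B, not depending on λ, with A ≠ 0, such that Z_taxi*(λ) = A·λ^{−1/3} + B for every λ > 0. -/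
/-! With `C = k (πcf + πck v + α) / (2 πcf v)`, the optimal density is `f = (C λ)^(2/3)`. Both
`λ`-dependent quantities in the cost, `f / λ` and `f^(-1/2)`, are then constant multiples of
`λ^(-1/3)`, namely by `C^(2/3)` and `C^(-1/3)`. Collecting terms gives `A` as a sum of positive
terms, and `B` as the remaining terms, which are free of `f` and `λ`. -/

/-- Optimal idle-taxi density. -/
noncomputable def taxi_fstar (πcf πck α k v lam : ℝ) : ℝ :=
  (lam * k * (πcf + πck * v + α) / (2 * πcf * v)) ^ ((2 : ℝ) / 3)

/-- Taxi operator cost per trip. -/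
noncomputable def taxi_Uo (πcf πck k v V W a b lam f : ℝ) : ℝ :=
  πcf * (f / lam + (k / v) * f ^ (-(1 / 2) : ℝ) + W / (2 * v) + (a + b) / (2 * V))
    + πck * (k * f ^ (-(1 / 2) : ℝ) + W / 2 + (a + b) / 2)

/-- Taxi patron cost per trip. -/
noncomputable def taxi_Up (k v V W a b f : ℝ) : ℝ :=
  (k / v) * f ^ (-(1 / 2) : ℝ) + W / (2 * v) + (a + b) / (2 * V)

/-- Economies of scale of the benchmark e-hailing taxi system: the optimized
generalized average system cost decomposes exactly as `A·λ^{-1/3} + B`. -/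
theorem taxi_economies_of_scale
    (πcf πck α k v V W a b : ℝ)
    (hπcf : 0 < πcf) (hπck : 0 < πck) (hα : 0 < α) (hk : 0 < k) (hv : 0 < v)
    (hV : 0 < V) (hW : 0 < W) (ha : 0 < a) (hb : 0 < b) (hab : a ≤ b) :
    ∃ A B : ℝ, A ≠ 0 ∧ ∀ lam : ℝ, 0 < lam →
      (1 / α) * taxi_Uo πcf πck k v V W a b lam (taxi_fstar πcf πck α k v lam)
          + taxi_Up k v V W a b (taxi_fstar πcf πck α k v lam)
        = A * lam ^ (-(1 / 3) : ℝ) + B := by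
  obtain ⟨C, hC⟩ : ∃ C, C = k * (πcf + πck * v + α) / (2 * πcf * v) := ⟨_, rfl⟩
  have hC0 : 0 < C := by rw [hC]; positivity
  have hP : 0 < C ^ ((2 : ℝ) / 3) := Real.rpow_pos_of_pos hC0 _
  have hQ : 0 < C ^ (-(1 / 3) : ℝ) := Real.rpow_pos_of_pos hC0 _
  refine ⟨(1 / α) * (πcf * (C ^ ((2 : ℝ) / 3) + (k / v) * C ^ (-(1 / 3) : ℝ))
      + πck * (k * C ^ (-(1 / 3) : ℝ))) + (k / v) * C ^ (-(1 / 3) : ℝ),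
    (1 / α) * (πcf * (W / (2 * v) + (a + b) / (2 * V)) + πck * (W / 2 + (a + b) / 2))
      + (W / (2 * v) + (a + b) / (2 * V)), by positivity, ?_⟩
  intro lam hl
  have hf : taxi_fstar πcf πck α k v lam = (C * lam) ^ ((2 : ℝ) / 3) := by
    rw [taxi_fstar, hC]
    congr 1
    ring
  have h1 : (C * lam) ^ ((2 : ℝ) / 3) / lam = C ^ ((2 : ℝ) / 3) * lam ^ (-(1 / 3) : ℝ) := by
    have h : lam ^ (-(1 / 3) : ℝ) = lam ^ ((2 : ℝ) / 3) / lam := by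
      rw [← Real.rpow_sub_one hl.ne']
      norm_num
    rw [Real.mul_rpow hC0.le hl.le, h, mul_div_assoc]
  have h2 : ((C * lam) ^ ((2 : ℝ) / 3)) ^ (-(1 / 2) : ℝ)
      = C ^ (-(1 / 3) : ℝ) * lam ^ (-(1 / 3) : ℝ) := by
    rw [← Real.rpow_mul (by positivity), ← Real.mul_rpow hC0.le hl.le]
    norm_num
  rw [hf, taxi_Uo, taxi_Up, h1, h2]
  ring
end

section
/- Fix positive reals π_tf, π_tk, π_lf, π_S, π_cf, π_ck, α, k, v, V, W, a, b with a ≤ b, and a positive integer J_max. Let U_p^FBT(λ) = (k/v)^{2/3}·[2·π_tf/(λ·(π_tf + π_tk·v + α))]^{1/3} + W/(2v) + (a+b)/(2V) + (1/(2√(2v)))·[((π_tf + α)·J_max + 2·(π_lf + π_S))/(λ·W·(π_tf + π_tk·v + α))]^{1/2} + (J_max/2)·[(π_tf + π_tk·v + α)/(2·λ·W·v·((π_tf + α)·J_max + 2·(π_lf + π_S)))]^{1/2}, and let U_p^taxi(λ) = (k/v)·[λ·k·(π_cf + π_ck·v + α)/(2·π_cf·v)]^{−1/3} + W/(2v) +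 (a+b)/(2V). Then the difference U_p^FBT(λ) − U_p^taxi(λ) tends to 0 as λ → ∞. -/
open Filter

/-!
The constant terms `W / (2 * v)` and `(a + b) / (2 * V)` cancel in the difference. Each
remaining term is a constant times a positive power of something of the form `c / (lam * d)`
with `d > 0`, or a negative power of a positive multiple of `lam`, so each tends to `0`.
-/

/-- Decay of the terms of the fly-by-transit cost that depend on the demand density. -/
lemma tendsto_const_mul_div_rpow_atTop (C c d p : ℝ) (hd : 0 < d) (hp : 0 < p) :
    Tendsto (fun x : ℝ => C * (c / (x * d)) ^ p) atTop (nhds 0) := by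
  have h : Tendsto (fun x : ℝ => c / (x * d)) atTop (nhds 0) :=
    (tendsto_id.atTop_mul_const hd).const_div_atTop c
  have h2 := (h.rpow_const (p := p) (Or.inr hp.le)).const_mul C
  rwa [Real.zero_rpow hp.ne', mul_zero] at h2

/-- The difference between the optimized fly-by-transit patron trip time and the
optimized e-hailing taxi patron trip time tends to `0` as demand density `λ → ∞`. -/
theorem FBT_taxi_patron_time_gap_tendsto_zero
    (πtf πtk πlf πS πcf πck α k v V W a b : ℝ)
    (hπtf : 0 < πtf) (hπtk : 0 < πtk) (hπlf : 0 < πlf) (hπS : 0 < πS)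
    (hπcf : 0 < πcf) (hπck : 0 < πck) (hα : 0 < α) (hk : 0 < k) (hv : 0 < v)
    (hV : 0 < V) (hW : 0 < W) (ha : 0 < a) (hb : 0 < b) (hab : a ≤ b)
    (Jmax : ℕ) (hJ : 0 < Jmax) :
    Tendsto (fun lam : ℝ =>
        ((k / v) ^ ((2 : ℝ) / 3)
              * (2 * πtf / (lam * (πtf + πtk * v + α))) ^ ((1 : ℝ) / 3)
            + W / (2 * v) + (a + b) / (2 * V)
            + (1 / (2 * Real.sqrt (2 * v)))
              * (((πtf + α) * Jmax + 2 * (πlf + πS))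
                  / (lam * W * (πtf + πtk * v + α))) ^ ((1 : ℝ) / 2)
            + ((Jmax : ℝ) / 2)
              * ((πtf + πtk * v + α)
                  / (2 * lam * W * v
                      * ((πtf + α) * Jmax + 2 * (πlf + πS)))) ^ ((1 : ℝ) / 2))
          - ((k / v)
                * (lam * k * (πcf + πck * v + α) / (2 * πcf * v)) ^ (-(1 / 3) : ℝ)
              + W / (2 * v) + (a + b) / (2 * V)))
      atTop (nhds 0) := by
  have hD : 0 < πtf + πtk * v + α := by positivity
  have hE : 0 < (πtf + α) * Jmax + 2 * (πlf + πS) := by positivity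
  have hF : 0 < k * (πcf + πck * v + α) / (2 * πcf * v) := by positivity
  have h1 := tendsto_const_mul_div_rpow_atTop ((k / v) ^ ((2 : ℝ) / 3)) (2 * πtf) _
    ((1 : ℝ) / 3) hD (by norm_num)
  have h2 := tendsto_const_mul_div_rpow_atTop (1 / (2 * Real.sqrt (2 * v)))
    ((πtf + α) * Jmax + 2 * (πlf + πS)) _ ((1 : ℝ) / 2) (mul_pos hW hD) (by norm_num)
  have h3 := tendsto_const_mul_div_rpow_atTop ((Jmax : ℝ) / 2) (πtf + πtk * v + α) _
    ((1 : ℝ) / 2) (mul_pos (by positivity : 0 < 2 * W * v) hE) (by norm_num)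
  have h4 := ((tendsto_rpow_neg_atTop (by norm_num : (0 : ℝ) < 1 / 3)).comp
    (tendsto_id.atTop_mul_const hF)).const_mul (k / v)
  have h := ((h1.add h2).add h3).sub h4
  simp only [mul_zero, add_zero, sub_zero] at h
  refine h.congr fun x => ?_
  simp only [Function.comp_apply, id]
  -- The arguments of the powers agree up to associativity and commutativity.
  rw [show x * (W * (πtf + πtk * v + α)) = x * W * (πtf + πtk * v + α) by ring,
    show x * (2 * W * v * ((πtf + α) * Jmax + 2 * (πlf + πS)))
      = 2 * x * W * v * ((πtf + α) * Jmax + 2 * (πlf + πS)) by ring,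
    show x * (k * (πcf + πck * v + α) / (2 * πcf * v))
      = x * k * (πcf + πck * v + α) / (2 * πcf * v) by ring]
  ring
end
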